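/- arXiv:1109.3553 — 6 statements merged into one kernel-verified Lean document; each statement's English description precedes it below -/
import Mathlib

section
/- Let F be a family of subsets of ℕ and, for sequences u, v : ℕ → ℝ, define u ∼ v to mean that {n ∈ ℕ | u n = v n} ∈ F. If the relation ∼ is transitive on the set of Cauchy sequences of real numbers, then F is closed under binary intersections: for all A, B ⊆ ℕ, if A ∈ F and B ∈ F then A ∩ B ∈ F. -/
/-!
Given `A, B ∈ F`, take null sequences `u ≥ 0` and `w ≤ 0` with zero sets exactly `A` and `B`.
They are Cauchy (`cauchySeq_ite_div`), `u ∼ 0 ∼ w`, and by the signs `u n = w n` holds exactly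
on `A ∩ B`, so transitivity puts `A ∩ B` in `F`.
-/

/-- A sequence vanishing on `S` and equal to `c / (n + 1)` elsewhere is null, hence Cauchy. -/
lemma cauchySeq_ite_div (S : Set ℕ) [DecidablePred (· ∈ S)] (c : ℝ) :
    CauchySeq (fun n : ℕ => if n ∈ S then (0 : ℝ) else c / ((n : ℝ) + 1)) := by
  have h : Filter.Tendsto (fun n : ℕ => |c| / ((n : ℝ) + 1)) Filter.atTop (nhds 0) := by
    simpa [div_eq_mul_inv] using
      (tendsto_one_div_add_atTop_nhds_zero_nat (𝕜 := ℝ)).const_mul |c|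
  refine (squeeze_zero_norm (fun n => ?_) h).cauchySeq
  have hn : (0 : ℝ) < (n : ℝ) + 1 := by positivity
  split_ifs
  · rw [norm_zero]
    positivity
  · rw [Real.norm_eq_abs, abs_div, abs_of_pos hn]

/-- If the relation "u ~ v iff {n | u n = v n} ∈ F" is transitive on Cauchy sequences of
reals, then `F` is closed under binary intersections. -/
theorem transitive_on_cauchy_implies_inter_closed (F : Set (Set ℕ))
    (htrans : ∀ u v w : ℕ → ℝ, CauchySeq u → CauchySeq v → CauchySeq w →
      {n : ℕ | u n = v n} ∈ F → {n : ℕ | v n = w n} ∈ F → {n : ℕ | u n = w n} ∈ F) :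
    ∀ A B : Set ℕ, A ∈ F → B ∈ F → A ∩ B ∈ F := by
  classical
  intro A B hA hB
  -- The opposite signs of the numerators keep `u` and `w` apart off `A ∩ B`.
  have key := htrans (fun n => if n ∈ A then 0 else 1 / ((n : ℝ) + 1)) (fun _ => 0)
    (fun n => if n ∈ B then 0 else (-1) / ((n : ℝ) + 1))
    (cauchySeq_ite_div A 1) (cauchySeq_const 0) (cauchySeq_ite_div B (-1))
  have pos (n : ℕ) : 0 < 1 / ((n : ℝ) + 1) := by positivity
  have neg (n : ℕ) : (-1) / ((n : ℝ) + 1) < 0 := by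
    rw [neg_div]
    exact neg_neg_of_pos (pos n)
  convert key ?_ ?_ using 1
  · ext n
    have := pos n
    have := neg n
    by_cases ha : n ∈ A <;> by_cases hb : n ∈ B <;>
      simp only [Set.mem_inter_iff, Set.mem_ofPred_eq, ha, hb, if_true, if_false, and_true,
        and_false, false_iff] <;>
      intro h <;> linarith
  · convert hA using 1
    ext n
    by_cases ha : n ∈ A <;> simp [ha, -one_div]
    positivity
  · convert hB using 1
    ext n
    by_cases hb : n ∈ B <;> simp [hb, (neg n).ne']
end

section
/- Let u, v : ℕ → ℝ be little-oh polynomials. Then at least one of the following holds: (u n − v n) = o(1/n) as n → ∞, or there exists N such that u n < v n for all n ≥ N, or there exists N such that v n < u n for all n ≥ N. (This expresses that the order on the ring of Fermat reals, defined by comparing representatives eventually pointwise, is total.) -/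
/-!
The difference `w = u - v` is, up to `o(1/n)`, a finite real combination of powers `n ^ (-b)`
(the constant term being the power with `b = 0`). After terms with equal exponents are collected,
there are two cases. If every exponent `b ≤ 1` has coefficient zero, each remaining power is
`o(1/n)`, hence so is `w`. Otherwise let `b ≤ 1` be the smallest exponent with nonzero
coefficient `c`: all other terms and the error are `o(n ^ (-b))`, so `w` eventually has the sign
of `c`.
-/

open Filter Asymptotics

/-- `u` is a little-oh polynomial: `u n = r + ∑ αᵢ n^(-aᵢ) + o(1/n)` with all `aᵢ > 0`. -/
def IsLittleOhPoly (u : ℕ → ℝ) : Prop :=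
  ∃ (k : ℕ) (r : ℝ) (α a : Fin k → ℝ), (∀ i, 0 < a i) ∧
    (fun n : ℕ => u n - (r + ∑ i, α i * (n : ℝ) ^ (-(a i)))) =o[atTop]
      (fun n : ℕ => 1 / (n : ℝ))

lemma rpow_neg_isLittleO {b d : ℝ} (h : b < d) :
    (fun n : ℕ => (n : ℝ) ^ (-d)) =o[atTop] (fun n : ℕ => (n : ℝ) ^ (-b)) := by
  have hlim := (tendsto_rpow_neg_atTop (sub_pos.mpr h)).comp
    (tendsto_natCast_atTop_atTop (R := ℝ))
  have hpos : ∀ᶠ n : ℕ in atTop, 0 < (n : ℝ) :=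
    (eventually_gt_atTop 0).mono fun n hn => Nat.cast_pos.mpr hn
  rw [isLittleO_iff_tendsto' (hpos.mono fun n hn h0 =>
    absurd h0 (Real.rpow_pos_of_pos hn _).ne')]
  refine hlim.congr' (hpos.mono fun n hn => ?_)
  beta_reduce
  rw [Function.comp_apply, ← Real.rpow_sub hn]
  congr 1
  ring

lemma eventually_pos_of_leading {w : ℕ → ℝ} {b c : ℝ} (hc : 0 < c)
    (h : (fun n : ℕ => w n - c * (n : ℝ) ^ (-b)) =o[atTop] (fun n : ℕ => (n : ℝ) ^ (-b))) :
    ∀ᶠ n in atTop, 0 < w n := by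
  filter_upwards [h.def (half_pos hc), eventually_gt_atTop 0] with n hn hpos
  have hp : 0 < (n : ℝ) ^ (-b) := Real.rpow_pos_of_pos (by exact_mod_cast hpos) _
  rw [Real.norm_eq_abs, Real.norm_eq_abs, abs_of_pos hp] at hn
  have h1 := (abs_le.mp hn).1
  have h2 : 0 < c * (n : ℝ) ^ (-b) := mul_pos hc hp
  linarith

/-- Trichotomy for a combination of powers with pairwise distinct exponents: the dominant term
decides, unless it is negligible against `1/n`. -/
lemma trichotomy_of_distinct {w : ℕ → ℝ} (s : Finset ℝ) (c : ℝ → ℝ)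
    (h : (fun n : ℕ => w n - ∑ b ∈ s, c b * (n : ℝ) ^ (-b)) =o[atTop]
      (fun n : ℕ => (n : ℝ) ^ (-1 : ℝ))) :
    (w =o[atTop] (fun n : ℕ => (n : ℝ) ^ (-1 : ℝ))) ∨
    (∀ᶠ n in atTop, w n < 0) ∨ (∀ᶠ n in atTop, 0 < w n) := by
  classical
  by_cases hne : (s.filter fun b => c b ≠ 0 ∧ b ≤ 1).Nonempty
  · right
    obtain ⟨b, hb, hmin⟩ := Finset.exists_min_image _ id hne
    simp only [Finset.mem_filter, id] at hb hmin
    obtain ⟨hbs, hcb, hb1⟩ := hb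
    have herr : (fun n : ℕ => w n - ∑ b ∈ s, c b * (n : ℝ) ^ (-b)) =o[atTop]
        (fun n : ℕ => (n : ℝ) ^ (-b)) := by
      rcases hb1.lt_or_eq with hlt | rfl
      · exact h.trans (rpow_neg_isLittleO hlt)
      · exact h
    have hrest : (fun n : ℕ => ∑ d ∈ s.erase b, c d * (n : ℝ) ^ (-d)) =o[atTop]
        (fun n : ℕ => (n : ℝ) ^ (-b)) := by
      refine IsLittleO.fun_sum fun d hd => ?_
      obtain ⟨hdb, hds⟩ := Finset.mem_erase.mp hd
      by_cases hcd : c d = 0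
      · simp only [hcd, zero_mul]
        exact isLittleO_zero _ _
      · refine (rpow_neg_isLittleO ?_).const_mul_left _
        by_contra! hle
        exact hdb (le_antisymm hle (hmin d ⟨hds, hcd, hle.trans hb1⟩))
    have hlead : (fun n : ℕ => w n - c b * (n : ℝ) ^ (-b)) =o[atTop]
        (fun n : ℕ => (n : ℝ) ^ (-b)) := by
      refine (herr.add hrest).congr_left fun n => ?_
      rw [← Finset.add_sum_erase s _ hbs]
      ring
    rcases lt_or_gt_of_ne hcb with hneg | hpos
    · left
      have := eventually_pos_of_leading (w := fun n => -w n) (b := b) (neg_pos.mpr hneg)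
        (hlead.neg_left.congr_left fun n => by ring)
      exact this.mono fun n hn => neg_pos.mp hn
    · exact Or.inr (eventually_pos_of_leading hpos hlead)
  · left
    have hsum : (fun n : ℕ => ∑ d ∈ s, c d * (n : ℝ) ^ (-d)) =o[atTop]
        (fun n : ℕ => (n : ℝ) ^ (-1 : ℝ)) := by
      refine IsLittleO.fun_sum fun d hd => ?_
      by_cases hcd : c d = 0
      · simp only [hcd, zero_mul]
        exact isLittleO_zero _ _
      · refine (rpow_neg_isLittleO ?_).const_mul_left _
        by_contra! hle
        exact hne ⟨d, Finset.mem_filter.mpr ⟨hd, hcd, hle⟩⟩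
    exact (h.add hsum).congr_left fun n => by ring

/-- The exponents `a i` may repeat here; terms with equal exponent are collected. -/
lemma trichotomy_of_indexed {ι : Type*} [Fintype ι] {w : ℕ → ℝ} (α a : ι → ℝ)
    (h : (fun n : ℕ => w n - ∑ i, α i * (n : ℝ) ^ (-(a i))) =o[atTop]
      (fun n : ℕ => (n : ℝ) ^ (-1 : ℝ))) :
    (w =o[atTop] (fun n : ℕ => (n : ℝ) ^ (-1 : ℝ))) ∨
    (∀ᶠ n in atTop, w n < 0) ∨ (∀ᶠ n in atTop, 0 < w n) := by
  classical
  refine trichotomy_of_distinct (Finset.univ.image a)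
    (fun b => ∑ i with a i = b, α i) (h.congr_left fun n => ?_)
  congr 1
  rw [← Finset.sum_fiberwise_of_maps_to (g := a) (t := Finset.univ.image a)
    (fun i hi => Finset.mem_image_of_mem a hi)]
  refine Finset.sum_congr rfl fun b _ => ?_
  rw [Finset.sum_mul]
  refine Finset.sum_congr rfl fun i hi => ?_
  rw [(Finset.mem_filter.mp hi).2]

/-- The order on the ring of Fermat reals is total: for little-oh polynomials `u, v`,
either `u - v = o(1/n)` (so they define the same Fermat real), or eventually `u n < v n`,
or eventually `v n < u n`. -/
theorem fermatReal_order_total (u v : ℕ → ℝ)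
    (hu : IsLittleOhPoly u) (hv : IsLittleOhPoly v) :
    ((fun n : ℕ => u n - v n) =o[atTop] (fun n : ℕ => 1 / (n : ℝ))) ∨
    (∃ N : ℕ, ∀ n ≥ N, u n < v n) ∨
    (∃ N : ℕ, ∀ n ≥ N, v n < u n) := by
  obtain ⟨k, r, α, a, -, hu⟩ := hu
  obtain ⟨l, q, β, b, -, hv⟩ := hv
  have hinv : (fun n : ℕ => 1 / (n : ℝ)) = fun n : ℕ => (n : ℝ) ^ (-1 : ℝ) := by
    funext n
    rw [Real.rpow_neg_one, one_div]
  rw [hinv] at hu hv ⊢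
  -- The index `none` carries the constant term `r - q`, with exponent `0`.
  have key := trichotomy_of_indexed (ι := Option (Fin k ⊕ Fin l)) (w := fun n => u n - v n)
    (fun o => o.elim (r - q) (Sum.elim α fun j => -β j))
    (fun o => o.elim 0 (Sum.elim a b))
    ((hu.sub hv).congr_left fun n => by
      simp [Fintype.sum_option, Fintype.sum_sum_type]
      ring)
  simpa only [eventually_atTop, sub_neg, sub_pos] using key
end

section
/- Nilpotency criterion for Fermat reals: let k ≥ 1, r ∈ ℝ, α : Fin k → ℝ with α i ≠ 0 for all i, and a : Fin k → ℝ strictly increasing with 0 < a i ≤ 1 for all i. Let u : ℕ → ℝ satisfy u n = r + Σ_{i} α i · n^{−a i} + o(1/n) as n → ∞. Then for every natural number p ≥ 2: the sequence n ↦ (u n)^p is o(1/n) as n → ∞ if and only if r = 0 and 1/(a 0) < p. (Here r is the standard part of the Fermat real [u] and 1/(a 0) is its order ω([u]); the condition says [u]^p = 0 iff st([u]) = 0 and ω([u]) < p.) -/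
open Filter Asymptotics

/-!
The leading term decides. The terms of the decomposition with index `i ≠ 0` and the `o(1/n)`
remainder are all `o(n^(-a 0))`, because `a 0` is the smallest exponent and `a 0 ≤ 1`; hence
`u n - r` is asymptotically equivalent to `α 0 * n^(-a 0)` (`sub_isEquivalent_leading`).
In particular `u n → r`, so `(u n)^p → r^p`, and `(u n)^p = o(1/n)` forces `r = 0`.
When `r = 0`, `(u n)^p` has the exact order of magnitude `n^(-(a 0 * p))`, and comparing powers
of `n` (`natCast_rpow_isLittleO_iff`) this is `o(n^(-1))` precisely when `1 < a 0 * p`.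
-/

theorem natCast_rpow_isLittleO_of_lt {s t : ℝ} (h : s < t) :
    (fun n : ℕ => (n : ℝ) ^ s) =o[atTop] (fun n : ℕ => (n : ℝ) ^ t) := by
  have h0 : Tendsto (fun n : ℕ => (n : ℝ) ^ (-(t - s))) atTop (nhds 0) :=
    (tendsto_rpow_neg_atTop (sub_pos.2 h)).comp tendsto_natCast_atTop_atTop
  refine (isLittleO_iff_tendsto' ?_).2 (h0.congr' ?_)
  · filter_upwards [eventually_gt_atTop 0] with n hn h1
    exact absurd h1 (Real.rpow_pos_of_pos (Nat.cast_pos.2 hn) t).ne'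
  · filter_upwards [eventually_gt_atTop 0] with n hn
    rw [neg_sub, Real.rpow_sub (Nat.cast_pos.2 hn)]

theorem natCast_rpow_isLittleO_iff {s t : ℝ} :
    ((fun n : ℕ => (n : ℝ) ^ s) =o[atTop] (fun n : ℕ => (n : ℝ) ^ t)) ↔ s < t := by
  refine ⟨fun h => ?_, natCast_rpow_isLittleO_of_lt⟩
  by_contra! hts
  have hO : (fun n : ℕ => (n : ℝ) ^ t) =O[atTop] (fun n : ℕ => (n : ℝ) ^ s) := by
    rcases hts.eq_or_lt with rfl | hlt
    · exact isBigO_refl _ _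
    · exact (natCast_rpow_isLittleO_of_lt hlt).isBigO
  refine isLittleO_irrefl ?_ (hO.trans_isLittleO h)
  refine Eventually.frequently ?_
  filter_upwards [eventually_gt_atTop 0] with n hn
  exact (Real.rpow_pos_of_pos (Nat.cast_pos.2 hn) t).ne'

theorem one_div_natCast_eq_rpow :
    (fun n : ℕ => 1 / (n : ℝ)) = fun n : ℕ => (n : ℝ) ^ (-1 : ℝ) := by
  funext n
  rw [Real.rpow_neg_one, one_div]

/-- The infinitesimal part of a decomposition is governed by its term of smallest exponent. -/
theorem sub_isEquivalent_leading (k : ℕ) (hk : 1 ≤ k) (r : ℝ)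
    (α a : Fin k → ℝ) (hα : ∀ i, α i ≠ 0) (hamono : StrictMono a)
    (ha : ∀ i, 0 < a i ∧ a i ≤ 1) (u : ℕ → ℝ)
    (hu : (fun n : ℕ => u n - (r + ∑ i, α i * (n : ℝ) ^ (-(a i)))) =o[atTop]
      (fun n : ℕ => 1 / (n : ℝ))) :
    (fun n : ℕ => u n - r) ~[atTop]
      (fun n : ℕ => α ⟨0, hk⟩ * (n : ℝ) ^ (-(a ⟨0, hk⟩))) := by
  set i₀ : Fin k := ⟨0, hk⟩
  have hmin : ∀ i, i ≠ i₀ → a i₀ < a i := fun i hi =>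
    hamono (lt_of_le_of_ne (Fin.mk_le_of_le_val (Nat.zero_le _)) hi.symm)
  have hsum : (fun n : ℕ => ∑ i ∈ Finset.univ.erase i₀, α i * (n : ℝ) ^ (-(a i))) =o[atTop]
      (fun n : ℕ => (n : ℝ) ^ (-(a i₀))) :=
    IsLittleO.fun_sum fun i hi => (natCast_rpow_isLittleO_of_lt
      (neg_lt_neg (hmin i (Finset.ne_of_mem_erase hi)))).const_mul_left _
  have hrem : (fun n : ℕ => u n - (r + ∑ i, α i * (n : ℝ) ^ (-(a i)))) =o[atTop]
      (fun n : ℕ => (n : ℝ) ^ (-(a i₀))) := by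
    refine hu.trans_isBigO ?_
    rw [one_div_natCast_eq_rpow]
    rcases (ha i₀).2.eq_or_lt with h | h
    · rw [h]
    · exact (natCast_rpow_isLittleO_of_lt (neg_lt_neg h)).isBigO
  refine ((hrem.add hsum).const_mul_right (hα i₀)).congr_left fun n => ?_
  rw [← Finset.add_sum_erase _ _ (Finset.mem_univ i₀)]
  simp only [Pi.sub_apply]
  ring

/-- Nilpotency criterion for Fermat reals: if `u n = r + ∑ αᵢ n^(-aᵢ) + o(1/n)` is a
decomposition (nonzero coefficients, strictly increasing exponents in `(0,1]`, `k ≥ 1`),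
then for `p ≥ 2`, `(u n)^p = o(1/n)` iff `r = 0` and the order `1 / a 0` is `< p`. -/
theorem fermatReal_pow_eq_zero_iff (k : ℕ) (hk : 1 ≤ k) (r : ℝ)
    (α a : Fin k → ℝ) (hα : ∀ i, α i ≠ 0) (hamono : StrictMono a)
    (ha : ∀ i, 0 < a i ∧ a i ≤ 1) (u : ℕ → ℝ)
    (hu : (fun n : ℕ => u n - (r + ∑ i, α i * (n : ℝ) ^ (-(a i)))) =o[atTop]
      (fun n : ℕ => 1 / (n : ℝ))) :
    ∀ p : ℕ, 2 ≤ p →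
      (((fun n : ℕ => (u n) ^ p) =o[atTop] (fun n : ℕ => 1 / (n : ℝ))) ↔
        (r = 0 ∧ 1 / a ⟨0, hk⟩ < (p : ℝ))) := by
  intro p hp
  have hequiv := sub_isEquivalent_leading k hk r α a hα hamono ha u hu
  have ha0 : 0 < a ⟨0, hk⟩ := (ha _).1
  by_cases hr : r = 0
  · subst hr
    simp only [sub_zero] at hequiv
    have hΘ : (fun n : ℕ => (u n) ^ p) =Θ[atTop]
        (fun n : ℕ => (n : ℝ) ^ (-(a ⟨0, hk⟩ * p))) := by
      have h1 := (hequiv.isTheta.trans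
        ((isTheta_refl _ _).const_mul_left (hα ⟨0, hk⟩))).pow p
      have h2 : (fun n : ℕ => (n : ℝ) ^ (-(a ⟨0, hk⟩ * p))) =
          fun n : ℕ => ((n : ℝ) ^ (-(a ⟨0, hk⟩))) ^ p := by
        funext n
        rw [← Real.rpow_mul_natCast (Nat.cast_nonneg n), neg_mul]
      rw [h2]
      exact h1
    rw [hΘ.isLittleO_congr_left, one_div_natCast_eq_rpow, natCast_rpow_isLittleO_iff,
      neg_lt_neg_iff, div_lt_iff₀' ha0]
    simp
  · refine iff_of_false (fun h => hr ?_) (fun h => hr h.1)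
    have hlead : Tendsto (fun n : ℕ => α ⟨0, hk⟩ * (n : ℝ) ^ (-(a ⟨0, hk⟩))) atTop (nhds 0) := by
      simpa using ((tendsto_rpow_neg_atTop ha0).comp
        tendsto_natCast_atTop_atTop).const_mul (α ⟨0, hk⟩)
    have hur : Tendsto u atTop (nhds r) := by
      simpa using (hequiv.symm.tendsto_nhds hlead).add_const r
    have h0 : Tendsto (fun n => u n ^ p) atTop (nhds 0) :=
      h.trans_tendsto tendsto_one_div_atTop_nhds_zero_nat
    exact eq_zero_of_pow_eq_zero (tendsto_nhds_unique (hur.pow p) h0)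
end

section
/- Products of powers of nilpotent infinitesimals: let m ∈ ℕ and for each j ∈ Fin m let h_j : ℕ → ℝ, α_j ∈ ℝ with α_j ≠ 0, and a_j ∈ ℝ with 0 < a_j ≤ 1, such that h_j n = α_j · n^{−a_j} + o(n^{−a_j}) as n → ∞ (so the Fermat real [h_j] is a nonzero infinitesimal of order ω(h_j) = 1/a_j). Let i : Fin m → ℕ. Then: (1) the sequence n ↦ Π_j (h_j n)^{i j} is o(1/n) as n → ∞ if and only if Σ_j (i j) · a_j > 1 (equivalently Σ_j (i j)/ω(h_j) > 1); (2) if Σ_j (i j) · a_j ≤ 1, then Π_j (h_j n)^{i j} = (Π_j α_j^{i j}) · n^{−Σ_j (i j)·a_j} + o(n^{−Σ_j (i j)·a_j}) as n → ∞, i.e. the order of the product satisfies 1/ω(Π h_j^{i j}) = Σ_j (i j)/ω(h_j). -/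
/-!
Each hypothesis says that `h j` is asymptotically equivalent to `αⱼ n^(-aⱼ)`. Asymptotic
equivalence is stable under powers and finite products, so with `S = ∑ⱼ (i j) aⱼ` and
`C = ∏ⱼ αⱼ^(i j) ≠ 0` the product is equivalent to `C n^(-S)` (`isEquivalent_prod_pow`); this is
part (2). In particular the product is of exact order `n^(-S)`, so part (1) reduces to the fact that
`n^(-S) = o(1/n)` iff `S > 1` (`rpow_neg_isLittleO_one_div_iff`).
-/

open Filter Asymptotics

theorem rpow_neg_isLittleO_one_div_iff (S : ℝ) :
    ((fun n : ℕ => (n : ℝ) ^ (-S)) =o[atTop] (fun n : ℕ => 1 / (n : ℝ))) ↔ 1 < S := by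
  constructor
  · intro hS
    by_contra! hle
    -- For `S ≤ 1` one has `1 / n ≤ n^(-S)`, so `n^(-S)` would be little-o of itself.
    have hO : (fun n : ℕ => 1 / (n : ℝ)) =O[atTop] (fun n : ℕ => (n : ℝ) ^ (-S)) := by
      refine IsBigO.of_bound 1 ?_
      filter_upwards [eventually_ge_atTop 1] with n hn
      have hn' : (1 : ℝ) ≤ n := by exact_mod_cast hn
      rw [one_mul, Real.norm_of_nonneg (by positivity), Real.norm_of_nonneg (by positivity),
        one_div, ← Real.rpow_neg_one]
      exact Real.rpow_le_rpow_of_exponent_le hn' (by linarith)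
    refine isLittleO_irrefl ?_ (hS.trans_isBigO hO)
    refine Eventually.frequently ?_
    filter_upwards [eventually_ge_atTop 1] with n hn
    have hn' : (0 : ℝ) < n := by exact_mod_cast hn
    exact (Real.rpow_pos_of_pos hn' _).ne'
  · intro hS
    have hne : ∀ᶠ n : ℕ in atTop, 1 / (n : ℝ) = 0 → (n : ℝ) ^ (-S) = 0 := by
      filter_upwards [eventually_ge_atTop 1] with n hn h0
      have hn' : (0 : ℝ) < n := by exact_mod_cast hn
      exact absurd h0 (by positivity)
    rw [isLittleO_iff_tendsto' hne]
    have hlim := (tendsto_rpow_neg_atTop (sub_pos.2 hS)).comp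
      (tendsto_natCast_atTop_atTop (R := ℝ))
    refine hlim.congr' ?_
    filter_upwards [eventually_ge_atTop 1] with n hn
    have hn' : (0 : ℝ) < n := by exact_mod_cast hn
    rw [Function.comp_apply, neg_sub, sub_eq_add_neg, Real.rpow_add hn', Real.rpow_one]
    field_simp

theorem isEquivalent_prod_pow (m : ℕ) (h : Fin m → ℕ → ℝ)
    (α a : Fin m → ℝ) (hα : ∀ j, α j ≠ 0)
    (hh : ∀ j, (fun n : ℕ => h j n - α j * (n : ℝ) ^ (-(a j))) =o[atTop]
      (fun n : ℕ => (n : ℝ) ^ (-(a j))))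
    (i : Fin m → ℕ) :
    (fun n : ℕ => ∏ j, (h j n) ^ (i j)) ~[atTop]
      (fun n : ℕ => (∏ j, (α j) ^ (i j)) * (n : ℝ) ^ (-(∑ j, (i j : ℝ) * a j))) := by
  have key : ∀ j, h j ~[atTop] (fun n : ℕ => α j * (n : ℝ) ^ (-(a j))) := fun j =>
    (hh j).trans_isBigO (isBigO_self_const_mul (hα j) _ _)
  have hp := IsEquivalent.finsetProd (s := Finset.univ) fun j _ => (key j).pow (i j)
  refine (hp.congr_left ?_).congr_right ?_
  · exact Eventually.of_forall fun n => by simp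
  · filter_upwards [eventually_ge_atTop 1] with n hn
    have hn' : (0 : ℝ) < n := by exact_mod_cast hn
    simp only [Finset.prod_apply, Pi.pow_apply, mul_pow, Finset.prod_mul_distrib]
    rw [← Finset.sum_neg_distrib, Real.rpow_sum_of_pos hn']
    congr 1
    refine Finset.prod_congr rfl fun j _ => ?_
    rw [← Real.rpow_mul_natCast hn'.le]
    congr 1
    ring

/-- Products of powers of nilpotent infinitesimals: if each `h j n = αⱼ n^(-aⱼ) + o(n^(-aⱼ))`
with `αⱼ ≠ 0` and `0 < aⱼ ≤ 1` (so `[h j]` is a nonzero infinitesimal of order `1/aⱼ`), then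
(1) `∏ⱼ (h j n)^(i j) = o(1/n)` iff `∑ⱼ (i j) aⱼ > 1`, and
(2) if `∑ⱼ (i j) aⱼ ≤ 1`, then
`∏ⱼ (h j n)^(i j) = (∏ⱼ αⱼ^(i j)) n^(-∑ⱼ (i j) aⱼ) + o(n^(-∑ⱼ (i j) aⱼ))`. -/
theorem prod_pow_nilpotent_infinitesimals (m : ℕ) (h : Fin m → ℕ → ℝ)
    (α a : Fin m → ℝ) (hα : ∀ j, α j ≠ 0) (ha : ∀ j, 0 < a j ∧ a j ≤ 1)
    (hh : ∀ j, (fun n : ℕ => h j n - α j * (n : ℝ) ^ (-(a j))) =o[atTop]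
      (fun n : ℕ => (n : ℝ) ^ (-(a j))))
    (i : Fin m → ℕ) :
    (((fun n : ℕ => ∏ j, (h j n) ^ (i j)) =o[atTop] (fun n : ℕ => 1 / (n : ℝ))) ↔
      1 < ∑ j, (i j : ℝ) * a j) ∧
    ((∑ j, (i j : ℝ) * a j) ≤ 1 →
      (fun n : ℕ => (∏ j, (h j n) ^ (i j)) -
          (∏ j, (α j) ^ (i j)) * (n : ℝ) ^ (-(∑ j, (i j : ℝ) * a j))) =o[atTop]
        (fun n : ℕ => (n : ℝ) ^ (-(∑ j, (i j : ℝ) * a j)))) := by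
  have hE := isEquivalent_prod_pow m h α a hα hh i
  have hC : (∏ j, (α j) ^ (i j)) ≠ 0 := Finset.prod_ne_zero_iff.2 fun j _ => pow_ne_zero _ (hα j)
  refine ⟨?_, fun _ => IsLittleO.trans_isBigO hE (isBigO_const_mul_self _ _ _)⟩
  rw [← rpow_neg_isLittleO_one_div_iff, hE.isTheta.isLittleO_congr_left,
    isLittleO_const_mul_left_iff hC]
end

section
/- Infinitesimal Taylor (derivation) formula: let f : ℝ → ℝ be infinitely differentiable (ContDiff ℝ ⊤ f) and x ∈ ℝ. Then there exists a unique m ∈ ℝ such that for every sequence h : ℕ → ℝ with (h n)² = o(1/n) as n → ∞ (i.e. h represents a first-order nilpotent infinitesimal, h ∈ D₁), one has f(x + h n) − f(x) − m · h n = o(1/n) as n → ∞. Moreover this unique m equals the derivative f′(x) = deriv f x. -/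
/-!
Since `deriv f` is differentiable at `x`, it is Lipschitz at `x`, so the mean value inequality
gives `f (x + t) - f x - f' x * t = O(t²)` as `t → 0`. Any `h` with `h² = o(1/n)` tends to `0`, so
composing yields the formula with `m = f' x`. For uniqueness, the sequence `h n = 1 / n` is
admissible, and `(f' x - m) / n = o(1/n)` forces `m = f' x`.
-/

open Filter Asymptotics

lemma taylor_remainder_isBigO (f : ℝ → ℝ) (hf : ContDiff ℝ (⊤ : ℕ∞) f) (x : ℝ) :
    (fun t : ℝ => f (x + t) - f x - deriv f x * t) =O[nhds 0] (fun t : ℝ => t ^ 2) := by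
  have hd : Differentiable ℝ f := hf.differentiable (by simp)
  have hd2 : Differentiable ℝ (deriv f) :=
    ((contDiff_infty_iff_deriv.1 hf).2).differentiable (by simp)
  obtain ⟨C, hC0, hC⟩ := (hd2 x).isBigO_sub.exists_pos
  obtain ⟨ε, hε, hball⟩ := Metric.eventually_nhds_iff.1 hC.bound
  refine IsBigO.of_bound C ?_
  filter_upwards [Metric.ball_mem_nhds (0 : ℝ) hε] with t ht
  have ht' : |t| < ε := by simpa using ht
  have hg : ∀ y, HasDerivAt (fun y => f y - deriv f x * y) (deriv f y - deriv f x) y := by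
    intro y
    simpa using (hd y).hasDerivAt.fun_sub ((hasDerivAt_id y).const_mul (deriv f x))
  have key := (convex_closedBall x |t|).norm_image_sub_le_of_norm_hasDerivWithin_le
    (f := fun y => f y - deriv f x * y) (f' := fun y => deriv f y - deriv f x)
    (C := C * |t|) (x := x) (y := x + t)
    (fun y _ => (hg y).hasDerivWithinAt)
    (fun y hy => by
      have hy' : dist y x ≤ |t| := hy
      have h1 := hball (lt_of_le_of_lt hy' ht')
      rw [Real.dist_eq] at hy'
      calc ‖deriv f y - deriv f x‖ ≤ C * ‖y - x‖ := h1
        _ ≤ C * |t| := by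
          rw [Real.norm_eq_abs]
          exact mul_le_mul_of_nonneg_left hy' hC0.le)
    (by simp) (by simp)
  have e : f (x + t) - f x - deriv f x * t
      = (f (x + t) - deriv f x * (x + t)) - (f x - deriv f x * x) := by ring
  rw [e, norm_pow, Real.norm_eq_abs t, sq, ← mul_assoc]
  simpa using key

lemma taylor_formula_deriv (f : ℝ → ℝ) (hf : ContDiff ℝ (⊤ : ℕ∞) f) (x : ℝ) (h : ℕ → ℝ)
    (hh : (fun n : ℕ => (h n) ^ 2) =o[atTop] (fun n : ℕ => 1 / (n : ℝ))) :
    (fun n : ℕ => f (x + h n) - f x - deriv f x * h n) =o[atTop]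
      (fun n : ℕ => 1 / (n : ℝ)) := by
  have h2 : Tendsto (fun n => (h n) ^ 2) atTop (nhds 0) :=
    hh.trans_tendsto tendsto_one_div_atTop_nhds_zero_nat
  have h0 : Tendsto h atTop (nhds 0) := by
    rw [tendsto_zero_iff_abs_tendsto_zero]
    have := h2.sqrt
    simpa [Real.sqrt_sq_eq_abs, Function.comp_def] using this
  exact ((taylor_remainder_isBigO f hf x).comp_tendsto h0).trans_isLittleO hh

/-- Infinitesimal Taylor (derivation) formula: for a smooth `f : ℝ → ℝ` and `x ∈ ℝ`,
there is a unique `m ∈ ℝ` such that `f (x + h) = f x + m * h` for every first-order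
nilpotent infinitesimal `h` (represented by sequences with `(h n)² = o(1/n)`), and
this `m` is the derivative `f'(x)`. -/
theorem infinitesimal_taylor_formula (f : ℝ → ℝ) (hf : ContDiff ℝ (⊤ : ℕ∞) f) (x : ℝ) :
    (∃! m : ℝ, ∀ h : ℕ → ℝ,
      ((fun n : ℕ => (h n) ^ 2) =o[atTop] (fun n : ℕ => 1 / (n : ℝ))) →
      (fun n : ℕ => f (x + h n) - f x - m * h n) =o[atTop] (fun n : ℕ => 1 / (n : ℝ))) ∧
    (∀ h : ℕ → ℝ,
      ((fun n : ℕ => (h n) ^ 2) =o[atTop] (fun n : ℕ => 1 / (n : ℝ))) →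
      (fun n : ℕ => f (x + h n) - f x - deriv f x * h n) =o[atTop]
        (fun n : ℕ => 1 / (n : ℝ))) := by
  refine ⟨⟨deriv f x, taylor_formula_deriv f hf x, fun m hm => ?_⟩, taylor_formula_deriv f hf x⟩
  have hh : (fun n : ℕ => (1 / (n : ℝ)) ^ 2) =o[atTop] (fun n : ℕ => 1 / (n : ℝ)) := by
    have h1 : (fun n : ℕ => 1 / (n : ℝ)) =o[atTop] (fun _ : ℕ => (1 : ℝ)) :=
      (isLittleO_one_iff ℝ).2 tendsto_one_div_atTop_nhds_zero_nat
    simpa [sq] using h1.mul_isBigO (isBigO_refl (fun n : ℕ => 1 / (n : ℝ)) atTop)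
  have hdiff := (hm _ hh).sub (taylor_formula_deriv f hf x _ hh)
  have hlin : (fun n : ℕ => (deriv f x - m) * (1 / (n : ℝ))) =o[atTop]
      (fun n : ℕ => 1 / (n : ℝ)) := hdiff.congr_left fun n => by ring
  by_contra hne
  have hself : (fun n : ℕ => 1 / (n : ℝ)) =o[atTop] (fun n : ℕ => 1 / (n : ℝ)) :=
    (isLittleO_const_mul_left_iff (sub_ne_zero.2 (Ne.symm hne))).1 hlin
  -- A sequence is `o` of itself only if it eventually vanishes, and `1 / n ≠ 0` for `n ≥ 1`.
  refine isLittleO_irrefl (Eventually.frequently ?_) hself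
  filter_upwards [eventually_gt_atTop 0] with n hn
  positivity
end

section
/- Smooth functions act on little-oh polynomials: let f : ℝ → ℝ be infinitely differentiable (ContDiff ℝ ⊤ f). (a) If u : ℕ → ℝ is a little-oh polynomial, then the sequence n ↦ f(u n) is again a little-oh polynomial. (b) If u, v : ℕ → ℝ are little-oh polynomials with u n − v n = o(1/n) as n → ∞, then f(u n) − f(v n) = o(1/n) as n → ∞. (Hence the Fermat extension of f to the ring of Fermat reals, defined on representatives by composition, is well defined.) -/
/-!
Little-oh polynomials form an algebra of sequences, stable under perturbations that are `o(1/n)`: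
sums are clear, and products reduce to multiplication by one monomial `n^(-a)`, because a
little-oh polynomial is bounded (`IsLittleOhPoly.mul`).

Since the exponents are finitely many positive reals, a little-oh polynomial `u` with constant
term `r` satisfies `u n - r = O(n^(-1/N))` for some `N ≥ 1` (`IsLittleOhPoly.exists_isBigO`), so
that `(u n - r)^N = O(1/n)`. The Taylor formula of order `N` for `f` at `r` thus gives
`f (u n) = T (u n) + o(1/n)` with `T` a polynomial, and `T (u n)` is a little-oh polynomial.

For the second claim, `u` and `v` have a common limit `r`, and `f` is Lipschitz near `r`, whence
`f (u n) - f (v n) = O(u n - v n)`.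
-/

open Filter Asymptotics

namespace IsLittleOhPoly

theorem const (c : ℝ) : IsLittleOhPoly (fun _ => c) :=
  ⟨0, c, Fin.elim0, Fin.elim0, fun i => i.elim0, by simp⟩

theorem congr_isLittleO {u v : ℕ → ℝ} (hv : IsLittleOhPoly v)
    (h : (fun n : ℕ => u n - v n) =o[atTop] (fun n : ℕ => 1 / (n : ℝ))) :
    IsLittleOhPoly u := by
  obtain ⟨k, r, α, a, ha, hv⟩ := hv
  exact ⟨k, r, α, a, ha, (h.add hv).congr_left fun n => by ring⟩

theorem add {u v : ℕ → ℝ} (hu : IsLittleOhPoly u) (hv : IsLittleOhPoly v) :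
    IsLittleOhPoly (fun n => u n + v n) := by
  obtain ⟨k, r, α, a, ha, hu⟩ := hu
  obtain ⟨l, s, β, b, hb, hv⟩ := hv
  refine ⟨k + l, r + s, Fin.append α β, Fin.append a b, ?_, ?_⟩
  · intro i
    refine Fin.addCases (fun j => ?_) (fun j => ?_) i
    · simpa using ha j
    · simpa using hb j
  · refine (hu.add hv).congr_left fun n => ?_
    simp only [Fin.sum_univ_add, Fin.append_left, Fin.append_right]
    ring

theorem sum {ι : Type*} (s : Finset ι) (u : ι → ℕ → ℝ) (h : ∀ i ∈ s, IsLittleOhPoly (u i)) :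
    IsLittleOhPoly (fun n => ∑ i ∈ s, u i n) := by
  classical
  induction s using Finset.induction_on with
  | empty => simpa using const 0
  | insert i s hi ih =>
    simp only [Finset.sum_insert hi]
    exact (h i (by simp)).add (ih fun j hj => h j (by simp [hj]))

theorem const_mul {u : ℕ → ℝ} (hu : IsLittleOhPoly u) (c : ℝ) :
    IsLittleOhPoly (fun n => c * u n) := by
  obtain ⟨k, r, α, a, ha, hu⟩ := hu
  refine ⟨k, c * r, fun i => c * α i, a, ha, (hu.const_mul_left c).congr_left fun n => ?_⟩
  simp only [mul_sub, mul_add, Finset.mul_sum, mul_assoc]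

/-- The exponents being finitely many, they are all at least `1/N` for some `N`. -/
theorem exists_isBigO {u : ℕ → ℝ} (hu : IsLittleOhPoly u) :
    ∃ (r : ℝ) (N : ℕ), N ≠ 0 ∧
      (fun n : ℕ => u n - r) =O[atTop] (fun n : ℕ => (n : ℝ) ^ (-(1 / (N : ℝ)))) := by
  obtain ⟨k, r, α, a, ha, hu⟩ := hu
  have mono : ∀ p q : ℝ, q ≤ p →
      (fun n : ℕ => (n : ℝ) ^ (-p)) =O[atTop] (fun n : ℕ => (n : ℝ) ^ (-q)) := by
    intro p q hpq
    refine IsBigO.of_bound 1 ?_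
    filter_upwards [eventually_ge_atTop 1] with n hn
    have hn' : (1 : ℝ) ≤ n := by exact_mod_cast hn
    rw [one_mul, Real.norm_of_nonneg (by positivity), Real.norm_of_nonneg (by positivity)]
    exact Real.rpow_le_rpow_of_exponent_le hn' (by linarith)
  let N : ℕ := ∑ i, ⌈1 / a i⌉₊ + 1
  have hN1 : (1 : ℝ) ≤ N := by exact_mod_cast Nat.le_add_left 1 _
  have hNa : ∀ i, 1 / (N : ℝ) ≤ a i := by
    intro i
    have h1 : ⌈1 / a i⌉₊ ≤ N :=
      (Finset.single_le_sum (f := fun i => ⌈1 / a i⌉₊) (fun _ _ => Nat.zero_le _)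
        (Finset.mem_univ i)).trans (Nat.le_succ _)
    have h2 : 1 / a i ≤ (N : ℝ) := (Nat.le_ceil _).trans (by exact_mod_cast h1)
    rw [div_le_iff₀ (by linarith)]
    rw [div_le_iff₀ (ha i)] at h2
    linarith
  refine ⟨r, N, Nat.succ_ne_zero _, ?_⟩
  have h1 : (fun n : ℕ => ∑ i, α i * (n : ℝ) ^ (-(a i))) =O[atTop]
      (fun n : ℕ => (n : ℝ) ^ (-(1 / (N : ℝ)))) :=
    IsBigO.fun_sum fun i _ => (mono _ _ (hNa i)).const_mul_left _
  have h2 : (fun n : ℕ => 1 / (n : ℝ)) =O[atTop] (fun n : ℕ => (n : ℝ) ^ (-(1 / (N : ℝ)))) := by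
    refine (mono 1 _ (by rw [div_le_one (by linarith)]; exact hN1)).congr_left fun n => ?_
    rw [Real.rpow_neg_one, one_div]
  exact ((hu.isBigO.trans h2).add h1).congr_left fun n => by ring

theorem tendsto_of_isBigO {u : ℕ → ℝ} {r : ℝ} {N : ℕ} (hN : N ≠ 0)
    (h : (fun n : ℕ => u n - r) =O[atTop] (fun n : ℕ => (n : ℝ) ^ (-(1 / (N : ℝ))))) :
    Tendsto u atTop (nhds r) := by
  have hpos : (0 : ℝ) < 1 / (N : ℝ) := by positivity
  exact tendsto_sub_nhds_zero_iff.1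
    (h.trans_tendsto ((tendsto_rpow_neg_atTop hpos).comp tendsto_natCast_atTop_atTop))

theorem exists_tendsto {u : ℕ → ℝ} (hu : IsLittleOhPoly u) :
    ∃ r, Tendsto u atTop (nhds r) := by
  obtain ⟨r, N, hN, h⟩ := hu.exists_isBigO
  exact ⟨r, tendsto_of_isBigO hN h⟩

theorem mul_monomial {u : ℕ → ℝ} (hu : IsLittleOhPoly u) {b : ℝ} (hb : 0 < b) :
    IsLittleOhPoly (fun n => u n * (n : ℝ) ^ (-b)) := by
  obtain ⟨k, r, α, a, ha, hu⟩ := hu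
  refine ⟨k + 1, 0, Fin.cons r α, Fin.cons b (fun i => a i + b), ?_, ?_⟩
  · intro i
    refine Fin.cases ?_ (fun j => ?_) i
    · simpa using hb
    · simpa using add_pos (ha j) hb
  · have hbd : (fun n : ℕ => (n : ℝ) ^ (-b)) =O[atTop] (fun _ : ℕ => (1 : ℝ)) :=
      ((tendsto_rpow_neg_atTop hb).comp tendsto_natCast_atTop_atTop).isBigO_one ℝ
    refine (hu.mul_isBigO hbd).congr' ?_ (by simp)
    filter_upwards [eventually_ge_atTop 1] with n hn
    have hn' : (0 : ℝ) < n := by exact_mod_cast hn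
    simp only [Fin.sum_univ_succ, Fin.cons_zero, Fin.cons_succ, neg_add, Real.rpow_add hn',
      ← mul_assoc, ← Finset.sum_mul]
    ring

theorem mul {u v : ℕ → ℝ} (hu : IsLittleOhPoly u) (hv : IsLittleOhPoly v) :
    IsLittleOhPoly (fun n => u n * v n) := by
  obtain ⟨l, s, β, b, hb, hv⟩ := hv
  obtain ⟨r, hr⟩ := hu.exists_tendsto
  have main : IsLittleOhPoly
      (fun n => s * u n + ∑ i, β i * (u n * (n : ℝ) ^ (-(b i)))) :=
    (hu.const_mul s).add
      (sum _ (fun i n => β i * (u n * (n : ℝ) ^ (-(b i)))) fun i _ =>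
        (hu.mul_monomial (hb i)).const_mul (β i))
  refine main.congr_isLittleO (((hr.isBigO_one ℝ).mul_isLittleO hv).congr (fun n => ?_) (by simp))
  have : ∑ i, β i * (u n * (n : ℝ) ^ (-(b i))) = u n * ∑ i, β i * (n : ℝ) ^ (-(b i)) := by
    rw [Finset.mul_sum]
    exact Finset.sum_congr rfl fun i _ => by ring
  rw [this]
  ring

theorem pow {u : ℕ → ℝ} (hu : IsLittleOhPoly u) (j : ℕ) :
    IsLittleOhPoly (fun n => u n ^ j) := by
  induction j with
  | zero => simpa using const 1
  | succ j ih => simpa only [pow_succ] using ih.mul hu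

theorem comp_contDiff {f : ℝ → ℝ} (hf : ContDiff ℝ (⊤ : ℕ∞) f) {u : ℕ → ℝ}
    (hu : IsLittleOhPoly u) : IsLittleOhPoly (fun n => f (u n)) := by
  obtain ⟨r, N, hN, h⟩ := hu.exists_isBigO
  have hsub : IsLittleOhPoly (fun n => u n - r) := by
    simpa only [sub_eq_add_neg] using hu.add (const (-r))
  have hT : IsLittleOhPoly (fun n => taylorWithinEval f N Set.univ r (u n)) := by
    simp only [taylor_within_apply, smul_eq_mul]
    refine sum _ (fun j n => ((j.factorial : ℝ)⁻¹ * (u n - r) ^ j) *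
      iteratedDerivWithin j f Set.univ r) fun j _ => ?_
    exact ((hsub.pow j).const_mul _).mul (const _)
  refine hT.congr_isLittleO ?_
  have hfN : ContDiff ℝ N f := hf.of_le (by exact_mod_cast le_top)
  refine ((taylor_isLittleO_univ (x₀ := r) hfN).comp_tendsto
    (tendsto_of_isBigO hN h)).trans_isBigO ((h.pow N).congr_right fun n => ?_)
  rw [← Real.rpow_mul_natCast (Nat.cast_nonneg n), neg_mul,
    one_div_mul_cancel (by exact_mod_cast hN), Real.rpow_neg_one, one_div]

end IsLittleOhPoly

/-- Smooth functions act on little-oh polynomials: composition with a smooth `f`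
preserves little-oh polynomials, and respects the Fermat-real equivalence
`u ~ v iff u - v = o(1/n)`; hence the Fermat extension of `f` is well defined. -/
theorem smooth_acts_on_littleOhPolys (f : ℝ → ℝ) (hf : ContDiff ℝ (⊤ : ℕ∞) f) :
    (∀ u : ℕ → ℝ, IsLittleOhPoly u → IsLittleOhPoly (fun n : ℕ => f (u n))) ∧
    (∀ u v : ℕ → ℝ, IsLittleOhPoly u → IsLittleOhPoly v →
      ((fun n : ℕ => u n - v n) =o[atTop] (fun n : ℕ => 1 / (n : ℝ))) →
      (fun n : ℕ => f (u n) - f (v n)) =o[atTop] (fun n : ℕ => 1 / (n : ℝ))) := by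
  refine ⟨fun u hu => hu.comp_contDiff hf, fun u v _ hv huv => ?_⟩
  obtain ⟨r, hr⟩ := hv.exists_tendsto
  have h0 : Tendsto (fun n => u n - v n) atTop (nhds 0) :=
    huv.isBigO.trans_tendsto tendsto_one_div_atTop_nhds_zero_nat
  have hur : Tendsto u atTop (nhds r) := by simpa using h0.add hr
  have hstrict := hf.contDiffAt.hasStrictFDerivAt (x := r) (by simp)
  exact (hstrict.isBigO_sub.comp_tendsto (hur.prodMk_nhds hr)).trans_isLittleO huv
end
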